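/- Let C be an [n,k,d] code with ((d−1)/n)^4 ≥ 7/8. Then the Tanner pair (G^n_{4,2}, C²) is 2^{-32}-robust, where G^n_{4,2} = G^n_4 © G^n_3 is the composition of the 4-Product-Tester graph (tests are 3-dimensional slices, compared against C³) with the 3-Product-Tester graph (tests are 2-dimensional slices, compared against C²). In particular C⁴ = TPC(G^n_{4,2}, C²), and global distance from C⁴ translates to expected distance of random 2-dimensional axis-parallel slices from C² up to factor 2^{-32}. -/

import Mathlib

/-- Relative Hamming distance between two words indexed by a finite type. -/
noncomputable def relHammingDist {ι F : Type} [Fintype ι] [DecidableEq F] (x y : ι → F) : ℝ :=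
  (hammingDist x y : ℝ) / (Fintype.card ι)

/-- Relative Hamming distance from a word to (the nearest codeword of) a code. -/
noncomputable def distToCode {ι F : Type} [Fintype ι] [DecidableEq F] (C : Set (ι → F)) (r : ι → F) : ℝ :=
  sInf (relHammingDist r '' C)

/-- Minimum Hamming distance of a code. -/
noncomputable def minDist {ι F : Type} [Fintype ι] [DecidableEq F] (C : Set (ι → F)) : ℕ :=
  sInf {e | ∃ x ∈ C, ∃ y ∈ C, x ≠ y ∧ hammingDist x y = e}

/-- The `m`-fold tensor power `C^m` of a code `C ⊆ F^n`. -/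
def tensorPow {F : Type} {n : ℕ} (C : Set (Fin n → F)) (m : ℕ) :
    Set ((Fin m → Fin n) → F) :=
  {r | ∀ (b : Fin m) (x : Fin m → Fin n), (fun i => r (Function.update x b i)) ∈ C}

/-- The slice `r_{b,i}`: fix the `b`-th coordinate of the array to `i`. -/
def sliceAt {F : Type} {n m : ℕ} (r : (Fin (m + 1) → Fin n) → F) (b : Fin (m + 1)) (i : Fin n) :
    (Fin m → Fin n) → F :=
  fun x => r (b.insertNth i x)


open Finset in
theorem weight_lemma {F : Type} [Field F] [DecidableEq F] {n d : ℕ} {ι : Type} [Fintype ι] [DecidableEq ι]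
    (C : Submodule F (Fin n → F))
    (hw : ∀ w ∈ C, w ≠ 0 → d ≤ #{i | w i ≠ 0})
    (h : (ι → Fin n) → F) (T : Finset ι)
    (hT : ∀ t ∈ T, ∀ x : ι → Fin n, (fun i => h (Function.update x t i)) ∈ C) :
    ∀ x0 : ι → Fin n, h x0 ≠ 0 →
      d ^ #T ≤ #{x : ι → Fin n | (∀ j, j ∉ T → x j = x0 j) ∧ h x ≠ 0} := by
  induction T using Finset.induction_on with
  | empty =>
    intro x0 h0
    simp only [card_empty, pow_zero, Nat.one_le_iff_ne_zero, ← Nat.pos_iff_ne_zero, card_pos]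
    exact ⟨x0, by simp [h0]⟩
  | insert t T ht ih =>
    intro x0 h0
    have ih' := ih (fun s hs => hT s (mem_insert_of_mem hs))
    have hl := hw _ (hT t (mem_insert_self _ _) x0) (by
      intro h1
      have := congrFun h1 (x0 t)
      simp at this
      exact h0 this)
    rw [card_insert_of_notMem ht, pow_succ, mul_comm]
    calc d * d ^ #T ≤ #{i | h (Function.update x0 t i) ≠ 0} * d ^ #T := Nat.mul_le_mul_right _ hl
      _ ≤ _ := ?_
    rw [card_eq_sum_card_fiberwise (s := ({x : ι → Fin n | (∀ j, j ∉ insert t T → x j = x0 j) ∧ h x ≠ 0} : Finset (ι → Fin n)))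
      (f := fun x => x t) (t := univ) (fun _ _ => mem_coe.2 (mem_univ _))]
    rw [← smul_eq_mul]
    refine (card_nsmul_le_sum _ (fun i => #{x ∈ ({x : ι → Fin n | (∀ j, j ∉ insert t T → x j = x0 j) ∧ h x ≠ 0} : Finset (ι → Fin n)) | x t = i}) _ ?_).trans (sum_le_univ_sum_of_nonneg (fun _ => Nat.zero_le _))
    intro i hi
    refine (ih' (Function.update x0 t i) (by simpa using hi)).trans (card_le_card ?_)
    intro x hx
    simp only [mem_filter, mem_univ, true_and, mem_insert, not_or] at hx ⊢
    refine ⟨⟨fun j hj => ?_, hx.2⟩, ?_⟩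
    · rw [hx.1 j hj.2, Function.update_of_ne hj.1]
    · rw [hx.1 t ht, Function.update_self]

open Finset in
theorem interp_lemma {F : Type} [Field F] [DecidableEq F] {n d : ℕ}
    (C : Submodule F (Fin n → F))
    (hw : ∀ w ∈ C, w ≠ 0 → d ≤ #{i | w i ≠ 0}) (S : Finset (Fin n)) (hS : n < #S + d) :
    ∃ A : Fin n → Fin n → F, (∀ w ∈ C, ∀ i, ∑ j ∈ S, A i j * w j = w i) ∧
      ∀ v : Fin n → F, (fun i => ∑ j ∈ S, A i j * v j) ∈ C := by
  classical
  let P : (Fin n → F) →ₗ[F] (Fin n → F) :=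
    ∑ j ∈ S, (LinearMap.single F (fun _ : Fin n => F) j).comp (LinearMap.proj j)
  have hP : ∀ v, P v = ∑ j ∈ S, Pi.single j (v j) := by
    intro v; simp [P]
  have hP2 : ∀ v i, i ∈ S → P v i = v i := by
    intro v i hi
    rw [hP, Finset.sum_apply, Finset.sum_eq_single i]
    · simp
    · intro b _ hb; simp [hb.symm]
    · simp [hi]
  have hinj : LinearMap.ker (P.comp C.subtype) = ⊥ := by
    rw [LinearMap.ker_eq_bot']
    intro w h0
    by_contra hne
    have h1 := hw w.1 w.2 (by simpa using hne)
    have h2 : ({i | w.1 i ≠ 0} : Finset (Fin n)) ⊆ Sᶜ := by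
      intro i hi
      rw [mem_compl]
      intro hiS
      have := hP2 w.1 i hiS
      have h3 := congrFun h0 i
      simp at h3 hi
      rw [h3] at this
      exact hi this.symm
    have h4 := card_le_card h2
    rw [card_compl, Fintype.card_fin] at h4
    have := card_le_univ S
    rw [Fintype.card_fin] at this
    omega
  obtain ⟨L, hL⟩ := LinearMap.exists_leftInverse_of_injective _ hinj
  have key : ∀ v i, ∑ j ∈ S, (L (Pi.single j 1) : Fin n → F) i * v j = (L (P v) : Fin n → F) i := by
    intro v i
    rw [hP, map_sum]
    simp only [Submodule.coe_sum, Finset.sum_apply]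
    refine sum_congr rfl fun j _ => ?_
    have : (Pi.single j (v j) : Fin n → F) = v j • Pi.single j 1 := by
      rw [← Pi.single_smul]; simp
    rw [this, map_smul]
    simp [mul_comm]
  refine ⟨fun i j => (L (Pi.single j 1) : Fin n → F) i, ?_, ?_⟩
  · intro w hwC i
    rw [key]
    have := LinearMap.congr_fun hL ⟨w, hwC⟩
    simp at this
    rw [this]
  · intro v
    have : (fun i => ∑ j ∈ S, (L (Pi.single j 1) : Fin n → F) i * v j) = (L (P v) : Fin n → F) := by
      funext i; exact key v i
    rw [this]; exact (L (P v)).2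

open Finset in
theorem erasure_lemma {F : Type} [Field F] [DecidableEq F] {n d : ℕ} {ι : Type} [Fintype ι] [DecidableEq ι]
    (C : Submodule F (Fin n → F))
    (hw : ∀ w ∈ C, w ≠ 0 → d ≤ #{i | w i ≠ 0})
    (a b : ι) (hab : a ≠ b) (ga gb : (ι → Fin n) → F)
    (hga : ∀ t, t ≠ a → ∀ x : ι → Fin n, (fun i => ga (Function.update x t i)) ∈ C)
    (hgb : ∀ t, t ≠ b → ∀ x : ι → Fin n, (fun i => gb (Function.update x t i)) ∈ C)
    (Sa Sb : Finset (Fin n)) (hSa : n < #Sa + d) (hSb : n < #Sb + d)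
    (hcons : ∀ x : ι → Fin n, x a ∈ Sa → x b ∈ Sb → ga x = gb x) :
    ∃ c : (ι → Fin n) → F, (∀ t, ∀ x : ι → Fin n, (fun i => c (Function.update x t i)) ∈ C) ∧
      ∀ x, x a ∈ Sa → c x = ga x := by
  obtain ⟨A, hA1, hA2⟩ := interp_lemma C hw Sa hSa
  obtain ⟨B, hB1, hB2⟩ := interp_lemma C hw Sb hSb
  have hext : ∀ x : ι → Fin n, ∃ w ∈ C, ∀ i ∈ Sa, w i = ga (Function.update x a i) := by
    intro x
    refine ⟨∑ j ∈ Sb, B (x b) j • fun i => gb (Function.update (Function.update x b j) a i),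
      Submodule.sum_mem _ fun j _ => Submodule.smul_mem _ _ (hgb a hab _), ?_⟩
    intro i hi
    have := hB1 _ (hga b hab.symm (Function.update x a i)) (x b)
    have e : Function.update (Function.update x a i) b (x b) = Function.update x a i := by
      rw [Function.update_comm hab]; simp
    simp only [e] at this
    rw [← this, Finset.sum_apply]
    refine sum_congr rfl fun j hj => ?_
    simp only [Pi.smul_apply, smul_eq_mul]
    rw [Function.update_comm hab, hcons]
    · simpa using hi
    · rw [Function.update_of_ne hab.symm]; simpa using hj
  refine ⟨fun x => ∑ i ∈ Sa, A (x a) i * ga (Function.update x a i), ?_, ?_⟩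
  · intro t x
    by_cases hta : t = a
    · subst hta
      simpa using hA2 (fun i => ga (Function.update x t i))
    · have : (fun i => ∑ i' ∈ Sa, A ((Function.update x t i) a) i' * ga (Function.update (Function.update x t i) a i'))
        = ∑ i' ∈ Sa, A (x a) i' • fun i => ga (Function.update (Function.update x a i') t i) := by
        funext i
        rw [Finset.sum_apply]
        refine sum_congr rfl fun j _ => ?_
        rw [Function.update_of_ne (Ne.symm hta), Function.update_comm hta]
        rfl
      rw [this]
      exact Submodule.sum_mem _ fun j _ => Submodule.smul_mem _ _ (hga t hta _)
  · intro x hx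
    obtain ⟨w, hwC, hwe⟩ := hext x
    have h1 := hA1 w hwC (x a)
    rw [hwe _ hx] at h1
    rw [Function.update_eq_self] at h1
    rw [← h1]
    exact sum_congr rfl fun i hi => by rw [hwe i hi]

open Finset in
/-- Inconsistency edges times the distance of the intersection code. -/
theorem edge_lemma {F : Type} [Field F] [DecidableEq F] {n d : ℕ} {ι : Type} [Fintype ι] [DecidableEq ι]
    (C : Submodule F (Fin n → F))
    (hw : ∀ w ∈ C, w ≠ 0 → d ≤ #{i | w i ≠ 0})
    (a b : ι) (hab : a ≠ b) (ga gb : (ι → Fin n) → F)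
    (hga : ∀ t, t ≠ a → ∀ x : ι → Fin n, (fun i => ga (Function.update x t i)) ∈ C)
    (hgb : ∀ t, t ≠ b → ∀ x : ι → Fin n, (fun i => gb (Function.update x t i)) ∈ C)
    (E : Finset (Fin n × Fin n)) (hE : ∀ p ∈ E, ∃ x : ι → Fin n, x a = p.1 ∧ x b = p.2 ∧ ga x ≠ gb x) :
    #E * d ^ (Fintype.card ι - 2) ≤ hammingDist ga gb := by
  have hfib : hammingDist ga gb = ∑ p : Fin n × Fin n,
      #{x ∈ ({x : ι → Fin n | ga x ≠ gb x} : Finset (ι → Fin n)) | (x a, x b) = p} :=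
    card_eq_sum_card_fiberwise (s := ({x : ι → Fin n | ga x ≠ gb x} : Finset (ι → Fin n)))
      (f := fun x : ι → Fin n => (x a, x b)) (t := (univ : Finset (Fin n × Fin n)))
      (by intro x hx; simp)
  rw [hfib]
  have hgen : ∀ (f : Fin n × Fin n → ℕ) (D : ℕ), (∀ p ∈ E, D ≤ f p) → #E * D ≤ ∑ p, f p := by
    intro f D hf
    rw [← smul_eq_mul]
    exact (card_nsmul_le_sum E f D hf).trans (sum_le_sum_of_subset (subset_univ E))
  apply hgen
  intro p hp
  obtain ⟨x0, h1, h2, h3⟩ := hE p hp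
  have hc : #((univ.erase a).erase b) = Fintype.card ι - 2 := by
    rw [card_erase_of_mem (by simp [hab.symm]), card_erase_of_mem (by simp), card_univ]
    omega
  have := weight_lemma C hw (fun x => ga x - gb x) ((univ.erase a).erase b) (by
    intro t ht x
    simp at ht
    exact C.sub_mem (hga t ht.2 x) (hgb t ht.1 x)) x0 (sub_ne_zero.2 h3)
  rw [hc] at this
  refine this.trans (card_le_card ?_)
  intro x hx
  simp only [mem_filter, mem_univ, true_and, sub_ne_zero] at hx ⊢
  refine ⟨hx.2, ?_⟩
  rw [hx.1 a (by simp), hx.1 b (by simp), h1, h2]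

open Finset in
theorem core_lemma {F : Type} [Field F] [DecidableEq F] {n d : ℕ} {ι : Type} [Fintype ι] [DecidableEq ι]
    (C : Submodule F (Fin n → F))
    (hw : ∀ w ∈ C, w ≠ 0 → d ≤ #{i | w i ≠ 0})
    (hdn : d ≤ n) (hn : 0 < n) (h78 : 7 * n ^ 4 ≤ 8 * d ^ 4)
    (hι : Fintype.card ι ≤ 4)
    (a b c : ι) (hab : a ≠ b) (hac : a ≠ c) (hbc : b ≠ c)
    (r ga gb gc : (ι → Fin n) → F)
    (hga : ∀ t, t ≠ a → ∀ x : ι → Fin n, (fun i => ga (Function.update x t i)) ∈ C)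
    (hgb : ∀ t, t ≠ b → ∀ x : ι → Fin n, (fun i => gb (Function.update x t i)) ∈ C)
    (hgc : ∀ t, t ≠ c → ∀ x : ι → Fin n, (fun i => gc (Function.update x t i)) ∈ C) :
    ∃ w : (ι → Fin n) → F, (∀ t, ∀ x : ι → Fin n, (fun i => w (Function.update x t i)) ∈ C) ∧
      hammingDist r w ≤ 4 * (hammingDist r ga + hammingDist r gb + hammingDist r gc) := by
  classical
  have hm3 : 3 ≤ Fintype.card ι := by
    rw [← card_univ]
    have : #({a, b, c} : Finset ι) = 3 := by
      rw [card_eq_three]; exact ⟨a, b, c, hab, hac, hbc, rfl⟩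
    rw [← this]; exact card_le_card (subset_univ _)
  obtain ⟨m, hm⟩ : ∃ m, Fintype.card ι = m + 2 := ⟨Fintype.card ι - 2, by omega⟩
  -- powers
  have hpow : ∀ k, k ≤ 4 → 7 * n ^ k ≤ 8 * d ^ k := by
    intro k hk
    have h1 : d ^ (4 - k) ≤ n ^ (4 - k) := Nat.pow_le_pow_left hdn _
    have h2 : 0 < n ^ (4 - k) := by positivity
    have e : k + (4 - k) = 4 := by omega
    have h3 : n ^ k * n ^ (4 - k) = n ^ 4 := by rw [← pow_add, e]
    have h4 : d ^ k * d ^ (4 - k) = d ^ 4 := by rw [← pow_add, e]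
    refine Nat.le_of_mul_le_mul_right ?_ h2
    calc 7 * n ^ k * n ^ (4 - k) = 7 * n ^ 4 := by rw [← h3]; ring
      _ ≤ 8 * d ^ 4 := h78
      _ = 8 * d ^ k * d ^ (4 - k) := by rw [← h4]; ring
      _ ≤ 8 * d ^ k * n ^ (4 - k) := Nat.mul_le_mul_left _ h1
  -- edges
  let E : ι → ι → ((ι → Fin n) → F) → ((ι → Fin n) → F) → Finset (Fin n × Fin n) :=
    fun s t g g' => {p | ∃ x : ι → Fin n, x s = p.1 ∧ x t = p.2 ∧ g x ≠ g' x}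
  have hEac := edge_lemma C hw a c hac ga gc hga hgc (E a c ga gc) (by intro p hp; simpa [E] using hp)
  have hEbc := edge_lemma C hw b c hbc gb gc hgb hgc (E b c gb gc) (by intro p hp; simpa [E] using hp)
  let Bad : Finset (Fin n × Fin n) → Finset (Fin n) := fun E => {i | d ≤ 2 * #{k | (i, k) ∈ E}}
  have hBad : ∀ E, #(Bad E) * d ≤ 2 * #E := by
    intro E
    rw [card_eq_sum_card_fiberwise (s := E) (f := Prod.fst) (t := univ) (fun _ _ => mem_coe.2 (mem_univ _)),
      mul_sum, ← smul_eq_mul]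
    refine (card_nsmul_le_sum (Bad E) (fun i => 2 * #{p ∈ E | p.1 = i}) _ ?_).trans (sum_le_univ_sum_of_nonneg (fun _ => Nat.zero_le _))
    intro i hi
    have hi' : d ≤ 2 * #{k | (i, k) ∈ E} := by simpa [Bad] using hi
    refine hi'.trans (Nat.mul_le_mul_left _ ?_)
    refine card_le_card_of_injOn (fun k => (i, k)) ?_ ?_
    · intro k hk; simpa using hk
    · intro k _ k' _ h; simpa using h
  have hb : ∀ (s : ι) (g : (ι → Fin n) → F), #(E s c g gc) * d ^ (Fintype.card ι - 2) ≤ hammingDist g gc →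
      #(Bad (E s c g gc)) * d ^ (m + 1) ≤ 2 * (hammingDist r g + hammingDist r gc) := by
    intro s g h
    rw [hm, Nat.add_sub_cancel] at h
    have h1 := hammingDist_triangle g r gc
    rw [hammingDist_comm g r] at h1
    calc _ = (#(Bad (E s c g gc)) * d) * d ^ m := by ring
      _ ≤ (2 * #(E s c g gc)) * d ^ m := Nat.mul_le_mul_right _ (hBad _)
      _ = 2 * (#(E s c g gc) * d ^ m) := by ring
      _ ≤ _ := by omega
  have hba := hb a ga hEac
  have hbb := hb b gb hEbc
  have htriv : ∀ g : (ι → Fin n) → F, d * d ^ (m + 1) ≤ 2 * (hammingDist r g + hammingDist r gc) →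
      hammingDist r 0 ≤ 4 * (hammingDist r g + hammingDist r gc) := by
    intro g h
    have h1 : hammingDist r 0 ≤ n ^ (m + 2) := by
      refine hammingDist_le_card_fintype.trans ?_
      simp [hm]
    have h2 := hpow (m + 2) (by omega)
    have h3 : d * d ^ (m + 1) = d ^ (m + 2) := by ring
    omega
  have hzero : ∀ t, ∀ x : ι → Fin n, (fun i => (0 : (ι → Fin n) → F) (Function.update x t i)) ∈ C :=
    fun t x => C.zero_mem
  by_cases hA : d ≤ #(Bad (E a c ga gc))
  · refine ⟨0, hzero, ?_⟩
    have := htriv ga ((Nat.mul_le_mul_right _ hA).trans hba)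
    omega
  by_cases hB : d ≤ #(Bad (E b c gb gc))
  · refine ⟨0, hzero, ?_⟩
    have := htriv gb ((Nat.mul_le_mul_right _ hB).trans hbb)
    omega
  have hcompl : ∀ S : Finset (Fin n), ¬ d ≤ #S → n < #Sᶜ + d := by
    intro S h
    have h1 := card_compl_add_card S
    rw [Fintype.card_fin] at h1
    omega
  obtain ⟨w, hw1, hw2⟩ := erasure_lemma C hw a b hab ga gb hga hgb (Bad (E a c ga gc))ᶜ (Bad (E b c gb gc))ᶜ
    (hcompl _ hA) (hcompl _ hB) (by
      intro x hxa hxb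
      by_contra hne
      have hl := hw _ (C.sub_mem (hga c hac.symm x) (hgb c hbc.symm x)) (by
        intro h0
        have := congrFun h0 (x c)
        simp [sub_eq_zero] at this
        exact hne this)
      simp only [Bad, mem_compl, mem_filter, mem_univ, true_and, not_le] at hxa hxb
      have hsub : ({i | ((fun i => ga (Function.update x c i)) - fun i => gb (Function.update x c i)) i ≠ 0} : Finset (Fin n))
          ⊆ ({k | (x a, k) ∈ E a c ga gc} : Finset (Fin n)) ∪ ({k | (x b, k) ∈ E b c gb gc} : Finset (Fin n)) := by
        intro k hk
        simp only [mem_filter, mem_univ, true_and, Pi.sub_apply, sub_ne_zero] at hk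
        simp only [mem_union, mem_filter, mem_univ, true_and, E]
        by_cases h : ga (Function.update x c k) = gc (Function.update x c k)
        · right
          exact ⟨Function.update x c k, by simp [hbc], by simp, fun h' => hk (h.trans h'.symm)⟩
        · left
          exact ⟨Function.update x c k, by simp [hac], by simp, h⟩
      have h1 := (hl.trans (card_le_card hsub)).trans (card_union_le _ _)
      omega)
  refine ⟨w, hw1, ?_⟩
  have hbadcells : hammingDist ga w ≤ #(Bad (E a c ga gc)) * n ^ (m + 1) := by
    have hsub : ({x | ga x ≠ w x} : Finset (ι → Fin n)) ⊆
        Fintype.piFinset (fun s => if s = a then Bad (E a c ga gc) else univ) := by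
      intro x hx
      rw [Fintype.mem_piFinset]
      intro s
      by_cases hs : s = a
      · subst hs
        simp only [if_true]
        by_contra h
        simp only [mem_filter, mem_univ, true_and] at hx
        exact hx (hw2 x (mem_compl.2 h)).symm
      · simp [hs]
    refine (card_le_card hsub).trans ?_
    rw [Fintype.card_piFinset, ← mul_prod_erase univ _ (mem_univ a)]
    simp only [if_true]
    refine Nat.mul_le_mul_left _ (le_of_eq ?_)
    rw [prod_congr rfl (g := fun _ => n) (by
      intro s hs
      simp at hs
      simp [hs])]
    rw [prod_const, card_erase_of_mem (mem_univ _), card_univ, hm]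
    rfl
  have h1 := hammingDist_triangle r ga w
  have h2 : 7 * (#(Bad (E a c ga gc)) * n ^ (m + 1)) ≤ 8 * (#(Bad (E a c ga gc)) * d ^ (m + 1)) := by
    have := Nat.mul_le_mul_left (#(Bad (E a c ga gc))) (hpow (m + 1) (by omega))
    linarith
  omega

theorem tensorPow_succ_eq {F : Type} {n m : ℕ} (C : Set (Fin n → F)) :
    tensorPow C (m + 2) = {r | ∀ (b : Fin (m + 2)) (i : Fin n), sliceAt r b i ∈ tensorPow C (m + 1)} := by
  ext r
  constructor
  · intro h b i s x
    have := h (b.succAbove s) (b.insertNth i x)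
    simp only [sliceAt, Fin.insertNth_update]
    exact this
  · intro h t x
    obtain ⟨b, hb⟩ := exists_ne t
    obtain ⟨s, rfl⟩ := Fin.exists_succAbove_eq hb.symm
    have := h b (x b) s (b.removeNth x)
    simp only [sliceAt, Fin.insertNth_update, Fin.insertNth_self_removeNth] at this
    exact this

theorem distToCode_attained {ι F : Type} [Fintype ι] [Finite F] [DecidableEq F]
    (C : Set (ι → F)) (hC : C.Nonempty) (r : ι → F) :
    ∃ c ∈ C, relHammingDist r c = distToCode C r := by
  classical
  have h : distToCode C r ∈ relHammingDist r '' C :=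
    (hC.image _).csInf_mem ((Set.toFinite C).image _)
  exact h

theorem distToCode_le {ι F : Type} [Fintype ι] [DecidableEq F]
    (C : Set (ι → F)) (r c : ι → F) (hc : c ∈ C) : distToCode C r ≤ relHammingDist r c := by
  refine csInf_le ⟨0, ?_⟩ ⟨c, hc, rfl⟩
  rintro _ ⟨y, _, rfl⟩
  unfold relHammingDist
  positivity

open Finset in
theorem slice_word {F : Type} [Field F] [Fintype F] [DecidableEq F] {n m : ℕ} (hn : 0 < n)
    (C : Submodule F (Fin n → F)) (r : (Fin (m + 1) → Fin n) → F) (b : Fin (m + 1)) :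
    ∃ g : (Fin (m + 1) → Fin n) → F,
      (∀ t, t ≠ b → ∀ x : Fin (m + 1) → Fin n, (fun i => g (Function.update x t i)) ∈ C) ∧
      (hammingDist r g : ℝ) = (n : ℝ) ^ m *
        ∑ i, distToCode (tensorPow (C : Set (Fin n → F)) m) (sliceAt r b i) := by
  have hne : (tensorPow (C : Set (Fin n → F)) m).Nonempty := ⟨0, fun _ _ => C.zero_mem⟩
  choose c hc1 hc2 using fun i => distToCode_attained _ hne (sliceAt r b i)
  refine ⟨fun x => c (x b) (b.removeNth x), ?_, ?_⟩
  · intro t ht x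
    obtain ⟨s, rfl⟩ := Fin.exists_succAbove_eq ht
    have := hc1 (x b) s (b.removeNth x)
    simp only [Fin.removeNth_update_succAbove, Function.update_of_ne ht.symm]
    exact this
  · have h1 : hammingDist r (fun x => c (x b) (b.removeNth x)) = ∑ i, hammingDist (sliceAt r b i) (c i) := by
      unfold hammingDist
      rw [card_eq_sum_card_fiberwise
        (s := ({x | r x ≠ c (x b) (b.removeNth x)} : Finset (Fin (m + 1) → Fin n)))
        (f := fun x => x b) (t := univ) (fun _ _ => mem_coe.2 (mem_univ _))]
      refine sum_congr rfl fun i _ => ?_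
      refine card_bij' (fun x _ => b.removeNth x) (fun y _ => b.insertNth i y) ?_ ?_ ?_ ?_
      · intro x hx
        simp only [mem_filter, mem_univ, true_and] at hx ⊢
        obtain ⟨h, rfl⟩ := hx
        simpa [sliceAt] using h
      · intro y hy
        simp only [mem_filter, mem_univ, true_and] at hy
        simpa [sliceAt] using hy
      · intro x hx
        simp only [mem_filter, mem_univ, true_and] at hx
        obtain ⟨h, rfl⟩ := hx
        simp
      · intro y hy
        simp
    rw [h1, mul_sum]
    push_cast
    refine sum_congr rfl fun i _ => ?_
    rw [← hc2, relHammingDist]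
    simp only [Fintype.card_pi, Fintype.card_fin, prod_const, card_univ]
    push_cast
    field_simp

open Finset in
theorem robust_step {F : Type} [Field F] [Fintype F] [DecidableEq F] {n d m : ℕ}
    (C : Submodule F (Fin n → F))
    (hw : ∀ w ∈ C, w ≠ 0 → d ≤ #{i | w i ≠ 0})
    (hdn : d ≤ n) (hn : 0 < n) (h78 : 7 * n ^ 4 ≤ 8 * d ^ 4) (hm : 2 ≤ m) (hm' : m ≤ 3)
    (r : (Fin (m + 1) → Fin n) → F) :
    distToCode (tensorPow (C : Set (Fin n → F)) (m + 1)) r * n ≤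
      4 * ∑ b, ∑ i, distToCode (tensorPow (C : Set (Fin n → F)) m) (sliceAt r b i) := by
  choose g hg1 hg2 using slice_word hn C r
  let a0 : Fin (m + 1) := ⟨0, by omega⟩
  let a1 : Fin (m + 1) := ⟨1, by omega⟩
  let a2 : Fin (m + 1) := ⟨2, by omega⟩
  have h01 : a0 ≠ a1 := by simp [a0, a1]
  have h02 : a0 ≠ a2 := by simp [a0, a2]
  have h12 : a1 ≠ a2 := by simp [a1, a2]
  obtain ⟨w, hw1, hw2⟩ := core_lemma C hw hdn hn h78 (by simp; omega) a0 a1 a2 h01 h02 h12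
    r (g a0) (g a1) (g a2) (hg1 _) (hg1 _) (hg1 _)
  have h3 : hammingDist r (g a0) + hammingDist r (g a1) + hammingDist r (g a2) ≤
      ∑ b, hammingDist r (g b) := by
    have : ∑ b ∈ {a0, a1, a2}, hammingDist r (g b) =
        hammingDist r (g a0) + hammingDist r (g a1) + hammingDist r (g a2) := by
      rw [sum_insert (by simp [h01, h02]), sum_insert (by simp [h12]), sum_singleton, add_assoc]
    rw [← this]
    exact sum_le_univ_sum_of_nonneg (fun _ => Nat.zero_le _)
  have h4 : hammingDist r w ≤ 4 * ∑ b, hammingDist r (g b) := by omega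
  have h5 : (hammingDist r w : ℝ) ≤ 4 * ∑ b, (hammingDist r (g b) : ℝ) := by exact_mod_cast h4
  simp only [hg2, ← mul_sum] at h5
  have h6 := distToCode_le (tensorPow (C : Set (Fin n → F)) (m + 1)) r w hw1
  have hnR : (0 : ℝ) < n := by exact_mod_cast hn
  rw [relHammingDist] at h6
  simp only [Fintype.card_pi, Fintype.card_fin, prod_const, card_univ] at h6
  push_cast at h6
  rw [le_div_iff₀ (by positivity), pow_succ] at h6
  have hp : (0 : ℝ) < (n : ℝ) ^ m := by positivity
  refine le_of_mul_le_mul_left ?_ hp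
  nlinarith

open Finset in
theorem code_params {F : Type} [Field F] [DecidableEq F] {n d : ℕ}
    (C : Submodule F (Fin n → F))
    (hd : minDist (C : Set (Fin n → F)) = d)
    (hdn : (7 : ℝ) / 8 ≤ (((d : ℝ) - 1) / n) ^ 4) :
    ∃ d' : ℕ, (∀ w ∈ C, w ≠ 0 → d' ≤ #{i | w i ≠ 0}) ∧ d' ≤ n ∧ 0 < n ∧ 7 * n ^ 4 ≤ 8 * d' ^ 4 := by
  have hn : 0 < n := by
    rcases Nat.eq_zero_or_pos n with h | h
    · subst h; norm_num at hdn
    · exact h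
  have hnR : (0 : ℝ) < n := by exact_mod_cast hn
  rw [div_pow, le_div_iff₀ (by positivity)] at hdn
  have hw : ∀ w ∈ C, w ≠ 0 → d ≤ #{i | w i ≠ 0} := by
    intro w hwC hw0
    rw [← hd]
    refine Nat.sInf_le ⟨w, hwC, 0, C.zero_mem, hw0, ?_⟩
    simp [hammingDist]
  by_cases hex : ∃ w ∈ C, w ≠ 0
  · obtain ⟨w, hwC, hw0⟩ := hex
    have hd1 : 1 ≤ d := by
      have hm : minDist (C : Set (Fin n → F)) ∈
          {e | ∃ x ∈ (C : Set (Fin n → F)), ∃ y ∈ (C : Set (Fin n → F)), x ≠ y ∧ hammingDist x y = e} :=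
        Nat.sInf_mem ⟨_, w, hwC, 0, C.zero_mem, hw0, rfl⟩
      obtain ⟨x, _, y, _, hxy, he⟩ := hm
      rw [← hd, ← he]
      exact hammingDist_pos.2 hxy
    refine ⟨d, hw, ?_, hn, ?_⟩
    · refine (hw w hwC hw0).trans ((card_le_univ _).trans ?_)
      simp
    · have hd1R : (1 : ℝ) ≤ d := by exact_mod_cast hd1
      have : ((d : ℝ) - 1) ^ 4 ≤ (d : ℝ) ^ 4 := pow_le_pow_left₀ (by linarith) (by linarith) 4
      have h : (7 : ℝ) * n ^ 4 ≤ 8 * d ^ 4 := by linarith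
      exact_mod_cast h
  · push Not at hex
    have hd0 : d = 0 := by
      rw [← hd]
      unfold minDist
      rw [Nat.sInf_eq_zero]
      right
      ext e
      simp only [Set.mem_ofPred_eq, Set.mem_empty_iff_false, iff_false]
      rintro ⟨x, hx, y, hy, hxy, _⟩
      exact hxy ((hex x hx).trans (hex y hy).symm)
    refine ⟨1, fun w hwC hw0 => absurd (hex w hwC) hw0, hn, hn, ?_⟩
    subst hd0
    have h : (7 : ℝ) * n ^ 4 ≤ 8 * 1 ^ 4 := by norm_num at hdn ⊢; linarith
    exact_mod_cast h

/-- Let `C` be an `[n,k,d]` code with `((d−1)/n)^4 ≥ 7/8`. Then the Tanner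
pair `(G^n_{4,2}, C²)` — whose tests, indexed by `((b₁,i₁),(b₂,i₂))`, read the
2-dimensional slice `(r_{b₁,i₁})_{b₂,i₂}` of `r` and compare it against `C²` — is
`2^{-32}`-robust: `C⁴ = TPC(G^n_{4,2}, C²)`, and for every `r`, the expected distance of
such a random 2-dimensional slice from `C²` is at least `2^{-32}·δ_{C⁴}(r)`. -/
theorem four_to_two_robust
    {F : Type} [Field F] [Fintype F] [DecidableEq F] {n k d : ℕ}
    (C : Submodule F (Fin n → F))
    (hk : Module.finrank F C = k)
    (hd : minDist (C : Set (Fin n → F)) = d)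
    (hdn : (7 : ℝ) / 8 ≤ (((d : ℝ) - 1) / n) ^ 4) :
    (tensorPow (C : Set (Fin n → F)) 4 =
      {r | ∀ (b₁ : Fin 4) (i₁ : Fin n) (b₂ : Fin 3) (i₂ : Fin n),
        sliceAt (sliceAt r b₁ i₁) b₂ i₂ ∈ tensorPow (C : Set (Fin n → F)) 2}) ∧
    ∀ r : (Fin 4 → Fin n) → F,
      (2 : ℝ) ^ (-32 : ℤ) * distToCode (tensorPow (C : Set (Fin n → F)) 4) r ≤
        (∑ b₁ : Fin 4, ∑ i₁ : Fin n, ∑ b₂ : Fin 3, ∑ i₂ : Fin n,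
          distToCode (tensorPow (C : Set (Fin n → F)) 2) (sliceAt (sliceAt r b₁ i₁) b₂ i₂)) /
          ((4 * n) * (3 * n)) := by
  obtain ⟨d', hw, hdn', hn, h78⟩ := code_params C hd hdn
  refine ⟨?_, fun r => ?_⟩
  · rw [tensorPow_succ_eq]
    ext r
    simp only [Set.mem_ofPred_eq, tensorPow_succ_eq (m := 1)]
  · have h4 := robust_step (m := 3) C hw hdn' hn h78 (by norm_num) (by norm_num) r
    have h3 : ∀ (b : Fin 4) (i : Fin n), _ := fun b i =>
      robust_step (m := 2) C hw hdn' hn h78 (by norm_num) (by norm_num) (sliceAt r b i)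
    have hsum : (∑ b : Fin 4, ∑ i : Fin n,
        distToCode (tensorPow (C : Set (Fin n → F)) 3) (sliceAt r b i)) * n ≤
        4 * ∑ b₁ : Fin 4, ∑ i₁ : Fin n, ∑ b₂ : Fin 3, ∑ i₂ : Fin n,
          distToCode (tensorPow (C : Set (Fin n → F)) 2) (sliceAt (sliceAt r b₁ i₁) b₂ i₂) := by
      simp only [Finset.sum_mul, Finset.mul_sum] at h3 ⊢
      exact Finset.sum_le_sum fun b _ => Finset.sum_le_sum fun i _ => h3 b i
    have hnR : (0 : ℝ) < n := by exact_mod_cast hn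
    have hnn : 0 ≤ distToCode (tensorPow (C : Set (Fin n → F)) 4) r := by
      apply Real.sInf_nonneg
      rintro _ ⟨y, _, rfl⟩
      unfold relHammingDist
      positivity
    rw [le_div_iff₀ (by positivity)]
    have h5 := mul_le_mul_of_nonneg_right h4 hnR.le
    have h6 : 0 ≤ distToCode (tensorPow (C : Set (Fin n → F)) 4) r * n * n := by positivity
    have h7 : (2 : ℝ) ^ (-32 : ℤ) * distToCode (tensorPow (C : Set (Fin n → F)) 4) r * (4 * n * (3 * n))
        = (2 : ℝ) ^ (-32 : ℤ) * 12 * (distToCode (tensorPow (C : Set (Fin n → F)) 4) r * n * n) := by ring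
    rw [h7]
    norm_num
    linarith
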